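/- Let n ≥ 4, let 0 < Z ≤ 2^n and set a = ⌊log_2 Z⌋. Let s and c be integers with 2^n - 2^s < c < 2^n - 2^{s-1}. Then the number of all 2^n-periodic binary sequences S (of arbitrary Hamming weight) with L_{1;Z}(S) = c equals 2^{c-1} + 2^{c-1+s} if s ≤ a, and equals (1 + Z) · 2^{c-1} if s > a. -/

import Mathlib

/-- Generating polynomial `S^N(x) = s_0 + s_1 x + ... + s_{N-1} x^{N-1}` of one period
of an `N`-periodic binary sequence. -/
noncomputable def genPoly {N : ℕ} (S : Fin N → ZMod 2) : Polynomial (ZMod 2) :=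
  ∑ i : Fin N, Polynomial.C (S i) * Polynomial.X ^ (i : ℕ)

/-- Linear complexity `L(S) = N - deg (gcd (1 - x^N, S^N(x)))`. -/
noncomputable def linComp {N : ℕ} (S : Fin N → ZMod 2) : ℕ :=
  N - (EuclideanDomain.gcd (1 - Polynomial.X ^ N) (genPoly S)).natDegree

/-- Hamming weight of one period of an `N`-periodic binary sequence. -/
def wt {N : ℕ} (T : Fin N → ZMod 2) : ℕ :=
  (Finset.univ.filter (fun i => T i ≠ 0)).card

/-- `k`-error linear complexity `L_{N,k}(S)`. -/
noncomputable def errLC {N : ℕ} (S : Fin N → ZMod 2) (k : ℕ) : ℕ :=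
  sInf {c | ∃ T : Fin N → ZMod 2, wt T ≤ k ∧ linComp (S + T) = c}

/-- `k`-error linear complexity with a zone of length `Z`: `L_{N,k;Z}(S)`. -/
noncomputable def errLCZone {N : ℕ} (S : Fin N → ZMod 2) (k Z : ℕ) : ℕ :=
  sInf {c | ∃ T : Fin N → ZMod 2, wt T ≤ k ∧ (∀ i : Fin N, Z ≤ (i : ℕ) → T i = 0) ∧
    linComp (S + T) = c}

/-- `E_1(j)`: the sequence whose only nonzero term in one period is a `1` at position `j`. -/
def E1 {N : ℕ} (j : Fin N) : Fin N → ZMod 2 :=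
  fun i => if i = j then 1 else 0

/-!
Over `ZMod 2` we have `1 - X ^ 2 ^ n = (X - 1) ^ 2 ^ n`, so the linear complexity of a
`2 ^ n`-periodic sequence is at most `m` exactly when `(X - 1) ^ (2 ^ n - m)` divides its generating
polynomial. Hence linear complexity is ultrametric, and `2 ^ (c - 1)` sequences have complexity `c`.

Two single errors at positions `i ≠ j` differ by `X ^ i - X ^ j`, of which `1` is a root whose
multiplicity is a power of two. When `2 ^ n - c` lies strictly between `2 ^ (s - 1)` and `2 ^ s`, no
two errors are therefore at distance exactly `c`: congruent positions modulo `2 ^ s` are closer, all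
other errors farther apart. Consequently the sequences of `1`-error complexity `c` are the sums of a
sequence of complexity `c` and an error from a transversal, and this representation is unique. The
errors at positions below `min Z (2 ^ s)`, together with the zero error, form a transversal.
-/

open Polynomial
open scoped Pointwise

section Multiplicity

variable {F : Type*} [Field F] {p : ℕ} [CharP F p]

theorem rootMultiplicity_one_X_pow_sub_one_of_not_dvd {m : ℕ} (hm : ¬ p ∣ m) :
    rootMultiplicity 1 (X ^ m - 1 : F[X]) = 1 := by
  have hm_cast : (m : F) ≠ 0 := (CharP.cast_eq_zero_iff F p m).not.2 hm
  have hsep : (X ^ m - 1 : F[X]).Separable := separable_X_pow_sub_C 1 hm_cast one_ne_zero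
  refine le_antisymm (rootMultiplicity_le_one_of_separable hsep 1) ?_
  exact (rootMultiplicity_pos hsep.ne_zero).2 (by simp)

variable [Fact p.Prime]

theorem rootMultiplicity_one_X_pow_sub_one {k : ℕ} (hk : k ≠ 0) :
    rootMultiplicity 1 (X ^ k - 1 : F[X]) = p ^ padicValNat p k := by
  obtain ⟨v, m, hm, rfl⟩ :=
    Nat.exists_eq_pow_mul_and_not_dvd hk p (Fact.out : p.Prime).ne_one
  have hval : padicValNat p (p ^ v * m) = v := by
    rw [padicValNat.mul (pow_ne_zero _ (Fact.out : p.Prime).ne_zero) (right_ne_zero_of_mul hk),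
      padicValNat.prime_pow, padicValNat.eq_zero_of_not_dvd hm, add_zero]
  have hexpand : (X ^ (p ^ v * m) - 1 : F[X]) = expand F (p ^ v) (X ^ m - 1) := by
    rw [map_sub, map_pow, expand_X, map_one, pow_mul]
  rw [hval, hexpand, rootMultiplicity_expand_pow, one_pow,
    rootMultiplicity_one_X_pow_sub_one_of_not_dvd hm, mul_one]

theorem X_sub_one_pow_dvd_X_pow_sub_one_iff {t k : ℕ} :
    (X - 1 : F[X]) ^ t ∣ X ^ k - 1 ↔ p ^ Nat.clog p t ∣ k := by
  rcases eq_or_ne k 0 with rfl | hk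
  · simp
  have hne : (X ^ k - 1 : F[X]) ≠ 0 := X_pow_sub_C_ne_zero (Nat.pos_of_ne_zero hk) 1
  rw [padicValNat_dvd_iff_le hk, Nat.clog_le_iff_le_pow (Fact.out : p.Prime).one_lt,
    ← rootMultiplicity_one_X_pow_sub_one (F := F) hk, le_rootMultiplicity_iff hne, C_1]

theorem X_sub_one_pow_dvd_X_pow_sub_X_pow_iff {t i j : ℕ} :
    (X - 1 : F[X]) ^ t ∣ X ^ i - X ^ j ↔ i ≡ j [MOD p ^ Nat.clog p t] := by
  wlog hij : j ≤ i generalizing i j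
  · rw [dvd_sub_comm, Nat.ModEq.comm]
    exact this (le_of_not_ge hij)
  have hcoprime : IsCoprime ((X - 1 : F[X]) ^ t) (X ^ j) :=
    IsCoprime.pow ⟨-1, 1, by ring⟩
  have hfactor : (X ^ i - X ^ j : F[X]) = X ^ j * (X ^ (i - j) - 1) := by
    rw [mul_sub, ← pow_add, Nat.add_sub_cancel' hij, mul_one]
  have hcancel : (X - 1 : F[X]) ^ t ∣ X ^ j * (X ^ (i - j) - 1) ↔
      (X - 1 : F[X]) ^ t ∣ X ^ (i - j) - 1 :=
    ⟨hcoprime.dvd_of_dvd_mul_left, fun h => h.mul_left _⟩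
  rw [hfactor, hcancel, X_sub_one_pow_dvd_X_pow_sub_one_iff (p := p),
    Nat.ModEq.comm, Nat.modEq_iff_dvd' hij]

end Multiplicity

section Multiples

theorem ncard_degreeLT {R : Type*} [Semiring R] (N : ℕ) :
    (degreeLT R N : Set R[X]).ncard = Nat.card R ^ N := by
  rw [← Nat.card_coe_set_eq]
  exact (Nat.card_congr (degreeLTEquiv R N).toEquiv).trans (by simp [Nat.card_fun])

variable {R : Type*} [CommRing R] [IsDomain R]

theorem mul_mem_degreeLT_iff {q : R[X]} (hq : q ≠ 0) {N : ℕ} {r : R[X]} :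
    q * r ∈ degreeLT R N ↔ r ∈ degreeLT R (N - q.natDegree) := by
  rcases eq_or_ne r 0 with rfl | hr
  · simp
  rw [mem_degreeLT, mem_degreeLT, degree_mul, degree_eq_natDegree hq, degree_eq_natDegree hr]
  norm_cast
  omega

theorem ncard_multiples_inter_degreeLT {q : R[X]} (hq : q ≠ 0) (N : ℕ) :
    ({r | q ∣ r} ∩ degreeLT R N : Set R[X]).ncard = Nat.card R ^ (N - q.natDegree) := by
  have himage : ({r | q ∣ r} ∩ degreeLT R N : Set R[X]) =
      (q * ·) '' (degreeLT R (N - q.natDegree) : Set R[X]) := by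
    ext r
    constructor
    · rintro ⟨⟨r, rfl⟩, hr⟩
      exact ⟨r, (mul_mem_degreeLT_iff hq).1 hr, rfl⟩
    · rintro ⟨r, hr, rfl⟩
      exact ⟨dvd_mul_right q r, (mul_mem_degreeLT_iff hq).2 hr⟩
  rw [himage, Set.ncard_image_of_injective _ (mul_right_injective₀ hq), ncard_degreeLT]

end Multiples

section GeneratingPolynomial

variable {N : ℕ}

theorem genPoly_eq_degreeLTEquiv_symm (S : Fin N → ZMod 2) :
    genPoly S = ((degreeLTEquiv (ZMod 2) N).symm S : (ZMod 2)[X]) :=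
  Finset.sum_congr rfl fun _ _ => C_mul_X_pow_eq_monomial

theorem genPoly_zero : genPoly (0 : Fin N → ZMod 2) = 0 := by
  simp [genPoly_eq_degreeLTEquiv_symm]

theorem genPoly_add (S T : Fin N → ZMod 2) : genPoly (S + T) = genPoly S + genPoly T := by
  simp [genPoly_eq_degreeLTEquiv_symm]

theorem genPoly_E1 (j : Fin N) : genPoly (E1 j) = X ^ (j : ℕ) := by
  simp [genPoly, E1]

theorem genPoly_injective : Function.Injective (genPoly (N := N)) := fun S T h => by
  simpa only [genPoly_eq_degreeLTEquiv_symm, SetLike.coe_eq_coe, EmbeddingLike.apply_eq_iff_eq]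
    using h

theorem range_genPoly : Set.range (genPoly (N := N)) = degreeLT (ZMod 2) N := by
  ext r
  constructor
  · rintro ⟨S, rfl⟩
    rw [genPoly_eq_degreeLTEquiv_symm]
    exact Subtype.coe_prop _
  · intro hr
    exact ⟨degreeLTEquiv (ZMod 2) N ⟨r, hr⟩, by simp [genPoly_eq_degreeLTEquiv_symm]⟩

theorem ncard_dvd_genPoly {q : (ZMod 2)[X]} (hq : q ≠ 0) :
    {S : Fin N → ZMod 2 | q ∣ genPoly S}.ncard = 2 ^ (N - q.natDegree) := by
  rw [← Set.ncard_image_of_injective _ genPoly_injective]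
  change (genPoly '' (genPoly ⁻¹' {r | q ∣ r})).ncard = _
  rw [Set.image_preimage_eq_inter_range, range_genPoly, ncard_multiples_inter_degreeLT hq,
    Nat.card_zmod]

end GeneratingPolynomial

section LinearComplexity

variable {n : ℕ}

theorem natDegree_X_sub_one_pow {R : Type*} [CommRing R] [Nontrivial R] (i : ℕ) :
    ((X - 1 : R[X]) ^ i).natDegree = i := by
  rw [← C_1, (monic_X_sub_C (1 : R)).natDegree_pow, natDegree_X_sub_C, mul_one]

theorem one_sub_X_pow_two_pow {R : Type*} [CommRing R] [CharP R 2] (n : ℕ) :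
    (1 - X ^ 2 ^ n : R[X]) = (X - 1) ^ 2 ^ n := by
  rw [sub_pow_char_pow, one_pow, CharTwo.sub_eq_add, CharTwo.sub_eq_add, add_comm]

theorem linComp_le_iff {S : Fin (2 ^ n) → ZMod 2} {m : ℕ} :
    linComp S ≤ m ↔ (X - 1 : (ZMod 2)[X]) ^ (2 ^ n - m) ∣ genPoly S := by
  have hprime : Prime (X - 1 : (ZMod 2)[X]) := prime_X_sub_C 1
  obtain ⟨i, hi, hassoc⟩ := (dvd_prime_pow hprime (2 ^ n)).1
    (EuclideanDomain.gcd_dvd_left ((X - 1) ^ 2 ^ n) (genPoly S))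
  have hdegree : linComp S = 2 ^ n - i := by
    rw [linComp, one_sub_X_pow_two_pow,
      natDegree_eq_of_degree_eq (degree_eq_degree_of_associated hassoc),
      natDegree_X_sub_one_pow]
  have hdvd : (X - 1 : (ZMod 2)[X]) ^ (2 ^ n - m) ∣ genPoly S ↔ 2 ^ n - m ≤ i := by
    rw [← pow_dvd_pow_iff hprime.ne_zero hprime.not_isUnit, ← hassoc.dvd_iff_dvd_right]
    exact ⟨EuclideanDomain.dvd_gcd (pow_dvd_pow _ (Nat.sub_le _ _)),
      fun h => h.trans (EuclideanDomain.gcd_dvd_right _ _)⟩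
  rw [hdegree, hdvd]
  omega

theorem linComp_zero : linComp (0 : Fin (2 ^ n) → ZMod 2) = 0 := by
  rw [← Nat.le_zero, linComp_le_iff, genPoly_zero]
  exact dvd_zero _

theorem linComp_add_le_max (S T : Fin (2 ^ n) → ZMod 2) :
    linComp (S + T) ≤ max (linComp S) (linComp T) := by
  rw [linComp_le_iff, genPoly_add]
  exact dvd_add (linComp_le_iff.1 (le_max_left _ _)) (linComp_le_iff.1 (le_max_right _ _))

theorem linComp_add_eq_left_of_lt {S T : Fin (2 ^ n) → ZMod 2} (h : linComp T < linComp S) :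
    linComp (S + T) = linComp S := by
  have hle := linComp_add_le_max S T
  have hge := linComp_add_le_max (S + T) T
  rw [add_assoc, ZModModule.add_self, add_zero] at hge
  omega

theorem ncard_linComp_le {m : ℕ} (hm : m ≤ 2 ^ n) :
    {S : Fin (2 ^ n) → ZMod 2 | linComp S ≤ m}.ncard = 2 ^ m := by
  have hne : (X - 1 : (ZMod 2)[X]) ≠ 0 := X_sub_C_ne_zero 1
  simp only [linComp_le_iff]
  rw [ncard_dvd_genPoly (pow_ne_zero _ hne), natDegree_X_sub_one_pow, Nat.sub_sub_self hm]

theorem ncard_linComp_eq {c : ℕ} (hc_pos : 0 < c) (hc : c ≤ 2 ^ n) :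
    {S : Fin (2 ^ n) → ZMod 2 | linComp S = c}.ncard = 2 ^ (c - 1) := by
  obtain ⟨d, rfl⟩ := Nat.exists_eq_add_one.2 hc_pos
  have hdiff : {S : Fin (2 ^ n) → ZMod 2 | linComp S = d + 1} =
      {S | linComp S ≤ d + 1} \ {S | linComp S ≤ d} := by
    ext S
    simp only [Set.mem_ofPred_eq, Set.mem_sdiff]
    omega
  have hsubset : {S : Fin (2 ^ n) → ZMod 2 | linComp S ≤ d} ⊆ {S | linComp S ≤ d + 1} :=
    fun _ hS => Nat.le_succ_of_le hS
  rw [hdiff, Set.ncard_sdiff hsubset, ncard_linComp_le hc, ncard_linComp_le (by omega),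
    pow_succ, Nat.add_sub_cancel]
  omega

theorem linComp_E1 (i : Fin (2 ^ n)) : linComp (E1 i) = 2 ^ n := by
  refine le_antisymm (Nat.sub_le _ _) (not_lt.1 fun hlt => ?_)
  have hdvd : (X - C 1 : (ZMod 2)[X]) ∣ X ^ (i : ℕ) := by
    rw [← genPoly_E1]
    exact (dvd_pow_self _ (Nat.sub_ne_zero_of_lt hlt)).trans (linComp_le_iff.1 le_rfl)
  rw [dvd_iff_isRoot] at hdvd
  simp at hdvd

theorem linComp_E1_add_E1_le_iff {i j : Fin (2 ^ n)} {m : ℕ} :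
    linComp (E1 i + E1 j) ≤ m ↔ (i : ℕ) ≡ j [MOD 2 ^ Nat.clog 2 (2 ^ n - m)] := by
  rw [linComp_le_iff, genPoly_add, genPoly_E1, genPoly_E1, ← CharTwo.sub_eq_add,
    X_sub_one_pow_dvd_X_pow_sub_X_pow_iff (p := 2)]

end LinearComplexity

section ZoneErrors

variable {N : ℕ}

/-- The errors `T` admitted in the definition of `L_{N,k;Z}`: at most `k` nonzero terms, all of them
at positions below `Z`. -/
def zoneErrors (N k Z : ℕ) : Set (Fin N → ZMod 2) :=
  {T | wt T ≤ k ∧ ∀ i : Fin N, Z ≤ (i : ℕ) → T i = 0}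

theorem zero_mem_zoneErrors (k Z : ℕ) : 0 ∈ zoneErrors N k Z := by
  simp [zoneErrors, wt]

theorem zoneErrors_mono_right {k Z Z' : ℕ} (h : Z ≤ Z') : zoneErrors N k Z ⊆ zoneErrors N k Z' :=
  fun _ hT => ⟨hT.1, fun i hi => hT.2 i (h.trans hi)⟩

theorem E1_injective : Function.Injective (E1 (N := N)) := fun i j h => by
  simpa [E1] using congrFun h i

theorem wt_le_one_iff {T : Fin N → ZMod 2} : wt T ≤ 1 ↔ T = 0 ∨ ∃ i, T = E1 i := by
  constructor
  · intro h
    refine or_iff_not_imp_left.2 fun hT => ?_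
    obtain ⟨i, hi⟩ := Function.ne_iff.1 hT
    refine ⟨i, funext fun j => ?_⟩
    rcases eq_or_ne j i with rfl | hj
    · exact (Fin.eq_one_of_ne_zero (T j) hi).trans (if_pos rfl).symm
    · have hTj : T j = 0 := by
        by_contra hTj
        exact hj (Finset.card_le_one.1 h j (by simpa using hTj) i (by simpa using hi))
      simp [E1, hj, hTj]
  · rintro (rfl | ⟨i, rfl⟩)
    · simp [wt]
    · simp [wt, E1, Finset.filter_eq']

theorem E1_eq_zero_off_zone_iff {Z : ℕ} {j : Fin N} :
    (∀ i : Fin N, Z ≤ (i : ℕ) → E1 j i = 0) ↔ (j : ℕ) < Z := by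
  simp only [E1, ite_eq_right_iff, one_ne_zero, imp_not_comm, not_le]
  exact forall_eq

theorem zoneErrors_one (N Z : ℕ) :
    zoneErrors N 1 Z = insert 0 (E1 '' {i : Fin N | (i : ℕ) < Z}) := by
  ext T
  simp only [zoneErrors, Set.mem_ofPred_eq, wt_le_one_iff, Set.mem_insert_iff, Set.mem_image]
  constructor
  · rintro ⟨rfl | ⟨i, rfl⟩, hzone⟩
    · exact Or.inl rfl
    · exact Or.inr ⟨i, E1_eq_zero_off_zone_iff.1 hzone, rfl⟩
  · rintro (rfl | ⟨i, hi, rfl⟩)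
    · exact ⟨Or.inl rfl, fun _ _ => rfl⟩
    · exact ⟨Or.inr ⟨i, rfl⟩, E1_eq_zero_off_zone_iff.2 hi⟩

theorem ncard_zoneErrors_one (N Z : ℕ) : (zoneErrors N 1 Z).ncard = 1 + min N Z := by
  have hzero : (0 : Fin N → ZMod 2) ∉ E1 '' {i : Fin N | (i : ℕ) < Z} := by
    rintro ⟨i, -, hi⟩
    simpa [E1] using congrFun hi i
  have hcard : {i : Fin N | (i : ℕ) < Z}.ncard = min N Z := by
    rw [Set.ncard_eq_toFinset_card', Set.toFinset_ofPred, Fin.card_filter_val_lt]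
  rw [zoneErrors_one, Set.ncard_insert_of_notMem hzero, Set.ncard_image_of_injective _ E1_injective,
    hcard, add_comm]

theorem errLCZone_eq_iff {S : Fin N → ZMod 2} {k Z c : ℕ} :
    errLCZone S k Z = c ↔
      (∃ T ∈ zoneErrors N k Z, linComp (S + T) = c) ∧
        ∀ T ∈ zoneErrors N k Z, c ≤ linComp (S + T) := by
  have hinf : errLCZone S k Z = sInf ((fun T => linComp (S + T)) '' zoneErrors N k Z) := by
    simp only [errLCZone, zoneErrors, Set.image, Set.mem_ofPred_eq, and_assoc]
  have hnonempty : ((fun T => linComp (S + T)) '' zoneErrors N k Z).Nonempty :=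
    ⟨_, 0, zero_mem_zoneErrors k Z, rfl⟩
  rw [hinf]
  constructor
  · rintro rfl
    exact ⟨Nat.sInf_mem hnonempty, fun T hT => Nat.sInf_le ⟨T, hT, rfl⟩⟩
  · rintro ⟨hattained, hlower⟩
    exact IsLeast.csInf_eq ⟨hattained, Set.forall_mem_image.2 hlower⟩

end ZoneErrors

section Transversal

variable {n k Z c : ℕ} {E R : Set (Fin (2 ^ n) → ZMod 2)}

/-- `R` represents the errors in `E` up to linear complexity less than `c`, and any two distinct
elements of `R` are separated by a linear complexity greater than `c`. In particular no two errors
in `E` have a difference of linear complexity exactly `c`. Differences are written as sums, since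
the coefficients lie in `ZMod 2`. -/
structure IsErrorTransversal (c : ℕ) (E R : Set (Fin (2 ^ n) → ZMod 2)) : Prop where
  subset : R ⊆ E
  exists_linComp_add_lt : ∀ T ∈ E, ∃ T' ∈ R, linComp (T + T') < c
  eq_of_linComp_add_le : ∀ T ∈ R, ∀ T' ∈ R, linComp (T + T') ≤ c → T = T'

namespace IsErrorTransversal

theorem le_linComp_add (hR : IsErrorTransversal c E R) {U T T' : Fin (2 ^ n) → ZMod 2}
    (hU : linComp U = c) (hT : T ∈ R) (hT' : T' ∈ E) : c ≤ linComp (U + T + T') := by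
  by_contra! hlt
  obtain ⟨T'', hT'', hclose⟩ := hR.exists_linComp_add_lt T' hT'
  have hlt' : linComp (U + T + T'') < c := by
    rw [← ZModModule.add_add_add_cancel (U + T) T' T'']
    exact (linComp_add_le_max _ _).trans_lt (max_lt hlt hclose)
  have hle : linComp (T + T'') ≤ c := by
    have hmax := linComp_add_le_max U (U + T + T'')
    rw [add_assoc U, ← add_assoc U U, ZModModule.add_self, zero_add, ← add_assoc] at hmax
    exact hmax.trans (max_le hU.le hlt'.le)
  obtain rfl := hR.eq_of_linComp_add_le T hT T'' hT'' hle
  rw [add_assoc, ZModModule.add_self, add_zero] at hlt'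
  exact hlt'.ne hU

theorem setOf_errLCZone_eq (hR : IsErrorTransversal c (zoneErrors (2 ^ n) k Z) R) :
    {S : Fin (2 ^ n) → ZMod 2 | errLCZone S k Z = c} = {U | linComp U = c} + R := by
  ext S
  rw [Set.mem_ofPred_eq, errLCZone_eq_iff, Set.mem_add]
  constructor
  · rintro ⟨⟨T, hT, hST⟩, -⟩
    obtain ⟨T', hT', hclose⟩ := hR.exists_linComp_add_lt T hT
    refine ⟨S + T', ?_, T', hT', by rw [add_assoc, ZModModule.add_self, add_zero]⟩
    rw [Set.mem_ofPred_eq, ← ZModModule.add_add_add_cancel S T T', ← hST]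
    exact linComp_add_eq_left_of_lt (hST ▸ hclose)
  · rintro ⟨U, hU, T, hT, rfl⟩
    refine ⟨⟨T, hR.subset hT, ?_⟩, fun T' hT' => hR.le_linComp_add hU hT hT'⟩
    rwa [add_assoc, ZModModule.add_self, add_zero]

theorem injOn_add (hR : IsErrorTransversal c E R) :
    Set.InjOn (fun p : (Fin (2 ^ n) → ZMod 2) × (Fin (2 ^ n) → ZMod 2) => p.1 + p.2)
      ({U | linComp U = c} ×ˢ R) := by
  rintro ⟨U, T⟩ ⟨hU, hT⟩ ⟨V, T'⟩ ⟨hV, hT'⟩ (hsum : U + T = V + T')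
  have hdiff : U + V = T + T' :=
    calc U + V = (U + T) + (T + V) := (ZModModule.add_add_add_cancel U T V).symm
      _ = (T + V) + (V + T') := by rw [hsum, add_comm]
      _ = T + T' := ZModModule.add_add_add_cancel T V T'
  have hle : linComp (T + T') ≤ c :=
    hdiff ▸ (linComp_add_le_max U V).trans (max_le hU.le hV.le)
  obtain rfl := hR.eq_of_linComp_add_le T hT T' hT' hle
  rw [add_right_cancel hsum]

theorem ncard_errLCZone_eq (hR : IsErrorTransversal c (zoneErrors (2 ^ n) k Z) R)
    (hc_pos : 0 < c) (hc : c ≤ 2 ^ n) :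
    {S : Fin (2 ^ n) → ZMod 2 | errLCZone S k Z = c}.ncard = R.ncard * 2 ^ (c - 1) := by
  rw [hR.setOf_errLCZone_eq, ← Set.add_image_prod, hR.injOn_add.ncard_image,
    Set.ncard_prod, ncard_linComp_eq hc_pos hc, mul_comm]

end IsErrorTransversal

end Transversal

section SingleError

variable {n s c : ℕ}

theorem linComp_E1_add_E1_lt_of_modEq (hs : s ≤ n) (hc : 2 ^ n - 2 ^ s < c) {i j : Fin (2 ^ n)}
    (hij : (i : ℕ) ≡ j [MOD 2 ^ s]) : linComp (E1 i + E1 j) < c := by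
  have hpow : 2 ^ s ≤ 2 ^ n := Nat.pow_le_pow_right two_pos hs
  refine lt_of_le_of_lt (linComp_E1_add_E1_le_iff.2 ?_) hc
  rwa [Nat.sub_sub_self hpow, Nat.clog_pow 2 s one_lt_two]

theorem modEq_of_linComp_E1_add_E1_le (hc : c < 2 ^ n - 2 ^ (s - 1)) {i j : Fin (2 ^ n)}
    (hle : linComp (E1 i + E1 j) ≤ c) : (i : ℕ) ≡ j [MOD 2 ^ s] := by
  have hclog : s - 1 < Nat.clog 2 (2 ^ n - c) :=
    (Nat.lt_clog_iff_pow_lt one_lt_two).2 (by omega)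
  exact (linComp_E1_add_E1_le_iff.1 hle).of_dvd (pow_dvd_pow 2 (by omega))

theorem le_of_lt_two_pow_sub (hc : c < 2 ^ n - 2 ^ (s - 1)) : s ≤ n := by
  have hpred : s - 1 < n := (Nat.pow_lt_pow_iff_right one_lt_two).1 (by omega)
  omega

theorem isErrorTransversal_zoneErrors_one (Z : ℕ) (hc_gt : 2 ^ n - 2 ^ s < c)
    (hc_lt : c < 2 ^ n - 2 ^ (s - 1)) :
    IsErrorTransversal c (zoneErrors (2 ^ n) 1 Z) (zoneErrors (2 ^ n) 1 (min Z (2 ^ s))) where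
  subset := zoneErrors_mono_right (min_le_left _ _)
  exists_linComp_add_lt := by
    simp only [zoneErrors_one, Set.forall_mem_insert, Set.forall_mem_image, Set.exists_mem_insert,
      Set.exists_mem_image]
    refine ⟨Or.inl (by rw [add_zero, linComp_zero]; omega), fun i (hi : (i : ℕ) < Z) => Or.inr ?_⟩
    have hmod_le : (i : ℕ) % 2 ^ s ≤ i := Nat.mod_le _ _
    exact ⟨⟨i % 2 ^ s, hmod_le.trans_lt i.isLt⟩,
      lt_min (hmod_le.trans_lt hi) (Nat.mod_lt _ (Nat.two_pow_pos s)),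
      linComp_E1_add_E1_lt_of_modEq (le_of_lt_two_pow_sub hc_lt) hc_gt (Nat.mod_modEq _ _).symm⟩
  eq_of_linComp_add_le := by
    have hfar (i : Fin (2 ^ n)) : ¬ linComp (E1 i) ≤ c := by
      rw [linComp_E1, not_le]
      exact hc_lt.trans_le (Nat.sub_le _ _)
    simp only [zoneErrors_one, Set.forall_mem_insert, Set.forall_mem_image, add_zero, zero_add]
    refine ⟨⟨fun _ => trivial, fun j _ hle => absurd hle (hfar j)⟩,
      fun i hi => ⟨fun hle => absurd hle (hfar i), fun j hj hle => ?_⟩⟩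
    have hmod := modEq_of_linComp_E1_add_E1_le hc_lt hle
    rw [Fin.ext (hmod.eq_of_lt_of_lt (lt_min_iff.1 hi).2 (lt_min_iff.1 hj).2)]

end SingleError

theorem stmt14_general {n s c : ℕ} (Z : ℕ) (hc_gt : 2 ^ n - 2 ^ s < c)
    (hc_lt : c < 2 ^ n - 2 ^ (s - 1)) :
    {S : Fin (2 ^ n) → ZMod 2 | errLCZone S 1 Z = c}.ncard =
      (1 + min Z (2 ^ s)) * 2 ^ (c - 1) := by
  have hzone : min Z (2 ^ s) ≤ 2 ^ n :=
    (min_le_right _ _).trans (Nat.pow_le_pow_right two_pos (le_of_lt_two_pow_sub hc_lt))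
  have hR := isErrorTransversal_zoneErrors_one Z hc_gt hc_lt
  rw [hR.ncard_errLCZone_eq (by omega) (hc_lt.le.trans (Nat.sub_le _ _)), ncard_zoneErrors_one,
    min_eq_right hzone]

/-- Counting all `2^n`-periodic sequences with `L_{1;Z}(S) = c` where
`2^n - 2^s < c < 2^n - 2^{s-1}`: the count is `2^{c-1} + 2^{c-1+s}` if `s ≤ a`,
and `(1+Z) · 2^{c-1}` if `s > a`. -/
theorem stmt14 (n Z s c : ℕ) (hn : 4 ≤ n) (hZ0 : 0 < Z) (hZ : Z ≤ 2^n)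
    (h1 : 2^n - 2^s < c) (h2 : c < 2^n - 2^(s-1)) :
    (s ≤ Nat.log 2 Z →
      {S : Fin (2^n) → ZMod 2 | errLCZone S 1 Z = c}.ncard
        = 2^(c - 1) + 2^(c - 1 + s)) ∧
    (Nat.log 2 Z < s →
      {S : Fin (2^n) → ZMod 2 | errLCZone S 1 Z = c}.ncard = (1 + Z) * 2^(c - 1)) := by
  refine ⟨fun h => ?_, fun h => ?_⟩ <;> rw [stmt14_general Z h1 h2]
  · rw [min_eq_right (Nat.pow_le_of_le_log hZ0.ne' h)]; ring
  · rw [min_eq_left (Nat.lt_pow_of_log_lt one_lt_two h).le]
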